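/- The quotient group Λ3♯/Λ3 has exactly 32 elements, consisting of: the zero coset; exactly 8 cosets of minimal norm 3/8, each of order 8; exactly 6 cosets of minimal norm 1/2, each of order 4; exactly 6 cosets of minimal norm 1, each of order 2; exactly 8 cosets of minimal norm 11/8, each of order 8; exactly 2 cosets of minimal norm 3/2, each of order 4; and exactly 1 coset of minimal norm 2, of order 2. Here the minimal norm of a coset is the minimum of ‖x‖² over x in the coset. -/

import Mathlib

noncomputable section

open scoped RealInnerProductSpace

/-- `ℝ^n` with the standard inner product. -/
abbrev E (n : ℕ) := EuclideanSpace ℝ (Fin n)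

/-- The standard basis vector `ε i`. -/
def εv {n : ℕ} (i : Fin n) : E n := EuclideanSpace.single i 1

/-- The vector of `ℝ^n` with the given coordinates. -/
def vec {n : ℕ} (x : Fin n → ℝ) : E n := (WithLp.equiv 2 (Fin n → ℝ)).symm x

/-- The vector of `ℝ^n` with the given integer coordinates. -/
def intVec {n : ℕ} (x : Fin n → ℤ) : E n := (WithLp.equiv 2 (Fin n → ℝ)).symm fun i => (x i : ℝ)

/-- A lattice is integral if all pairwise inner products of its elements are integers. -/
def LatticeIsIntegral {n : ℕ} (L : Submodule ℤ (E n)) : Prop :=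
  ∀ x ∈ L, ∀ y ∈ L, ∃ k : ℤ, ⟪x, y⟫ = (k : ℝ)

/-- Two lattices are isometric if a linear isometry of the ambient space carries
one onto the other. -/
def IsometricLattices {n : ℕ} (L M : Submodule ℤ (E n)) : Prop :=
  ∃ g : E n ≃ₗᵢ[ℝ] E n, g '' (L : Set (E n)) = (M : Set (E n))

/-- The laminated lattice `Λ₃ = {√2·x : x ∈ ℤ⁴, x 0 + x 1 + x 2 + x 3 = 0} ≅ √2·A₃`. -/
def Λ3 : Submodule ℤ (E 4) :=
  Submodule.span ℤ
    {v : E 4 | ∃ x : Fin 4 → ℤ, x 0 + x 1 + x 2 + x 3 = 0 ∧ v = Real.sqrt 2 • intVec x}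

/-- The dual lattice of `Λ` inside the hyperplane `V = {x : ∑ i, x i = 0}`:
`Λ♯ = {x ∈ V : ⟪x,y⟫ ∈ ℤ for all y ∈ Λ}`. -/
def dualLatticeIn {n : ℕ} (Λ : Submodule ℤ (E n)) : Submodule ℤ (E n) where
  carrier := {x | (∑ i, x i = 0) ∧ ∀ y ∈ Λ, ∃ k : ℤ, ⟪x, y⟫ = (k : ℝ)}
  zero_mem' := ⟨by simp, fun y _ => ⟨0, by simp⟩⟩
  add_mem' := by
    rintro a b ⟨ha0, ha⟩ ⟨hb0, hb⟩
    refine ⟨?_, ?_⟩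
    · simp only [PiLp.add_apply, Finset.sum_add_distrib, ha0, hb0, add_zero]
    · intro y hy
      obtain ⟨k, hk⟩ := ha y hy
      obtain ⟨l, hl⟩ := hb y hy
      exact ⟨k + l, by rw [inner_add_left, hk, hl]; push_cast; ring⟩
  smul_mem' := by
    rintro c x ⟨hx0, hx⟩
    refine ⟨?_, ?_⟩
    · simp only [PiLp.smul_apply, smul_eq_mul, zsmul_eq_mul, ← Finset.mul_sum, hx0, mul_zero]
    · intro y hy
      obtain ⟨k, hk⟩ := hx y hy
      refine ⟨c * k, ?_⟩
      rw [← Int.cast_smul_eq_zsmul ℝ c x, real_inner_smul_left, hk]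
      push_cast
      ring

/-- The quotient abelian group `Λ♯/Λ`. -/
abbrev DualQuotIn {n : ℕ} (Λ : Submodule ℤ (E n)) :=
  (dualLatticeIn Λ) ⧸ (Λ.comap (dualLatticeIn Λ).subtype)

/-- The coset `c ∈ Λ♯/Λ` has minimal norm `m`, i.e. `m` is the minimum of `‖x‖²`
over `x` in the coset `c`. -/
def CosetMinNormIn {n : ℕ} (Λ : Submodule ℤ (E n)) (c : DualQuotIn Λ) (m : ℝ) : Prop :=
  IsLeast {r : ℝ | ∃ x : dualLatticeIn Λ, Submodule.Quotient.mk x = c ∧ r = ‖(x : E n)‖ ^ 2} m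

/-- Index set for the 32 cosets. -/
abbrev Idx := Fin 8 × Fin 2 × Fin 2

/-- Table of minimal representatives, scaled by `4√2`. -/
def tab3 : Fin 8 → Fin 2 → Fin 2 → Fin 4 → ℤ := ![
  ![![![0, 0, 0, 0], ![0, 0, -4, 4]],
    ![![0, -4, 0, 4], ![0, -4, 4, 0]]],
  ![![![1, 1, 1, -3], ![1, 1, -3, 1]],
    ![![1, -3, 1, 1], ![1, -3, -3, 5]]],
  ![![![-6, 2, 2, 2], ![2, 2, -2, -2]],
    ![![2, -2, 2, -2], ![2, -2, -2, 2]]],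
  ![![![-5, 3, 3, -1], ![-5, 3, -1, 3]],
    ![![-5, -1, 3, 3], ![3, -1, -1, -1]]],
  ![![![-4, -4, 4, 4], ![-4, 4, 0, 0]],
    ![![-4, 0, 4, 0], ![-4, 0, 0, 4]]],
  ![![![-3, -3, 5, 1], ![-3, -3, 1, 5]],
    ![![-3, 1, -3, 5], ![-3, 1, 1, 1]]],
  ![![![-2, -2, -2, 6], ![-2, -2, 2, 2]],
    ![![-2, 2, -2, 2], ![-2, 2, 2, -2]]],
  ![![![-1, -1, -1, 3], ![-1, -1, 3, -1]],
    ![![-1, 3, -1, -1], ![-1, -5, 3, 3]]]]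

/-- Multipliers certifying minimality. -/
def lam3 : Fin 8 → Fin 2 → Fin 2 → ℤ := ![![![0, 0], ![0, 0]], ![![0, 0], ![0, -2]], ![![4, 0], ![0, 0]], ![![2, 2], ![2, 0]], ![![0, 0], ![0, 0]], ![![-2, -2], ![-2, 0]], ![![-4, 0], ![0, 0]], ![![0, 0], ![0, 2]]]

/-- Minimal representative. -/
def tab (j : Idx) : Fin 4 → ℤ := tab3 j.1 j.2.1 j.2.2

/-- Multiplier. -/
def lam (j : Idx) : ℤ := lam3 j.1 j.2.1 j.2.2

/-- Scaled norm. -/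
def nrm (j : Idx) : ℤ := tab j 0 ^ 2 + tab j 1 ^ 2 + tab j 2 ^ 2 + tab j 3 ^ 2

/-- Order. -/
def ord (j : Idx) : ℕ :=
  if j.1.val % 2 = 1 then 8 else if j.1.val % 4 = 2 then 4 else if j = 0 then 1 else 2

set_option maxRecDepth 100000

theorem tab_sum : ∀ j, tab j 0 + tab j 1 + tab j 2 + tab j 3 = 0 := by decide +kernel
theorem tab_res : ∀ j : Idx, 8 ∣ tab j 0 - (j.1.val : ℤ) ∧
    8 ∣ tab j 1 - ((j.1.val : ℤ) + 4 * (j.2.1.val : ℤ)) ∧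
    8 ∣ tab j 2 - ((j.1.val : ℤ) + 4 * (j.2.2.val : ℤ)) := by decide +kernel
theorem tab_lam : ∀ j : Idx, ∀ i, -8 ≤ 2 * tab j i + lam j ∧ 2 * tab j i + lam j ≤ 8 := by decide +kernel
theorem tab_ord : ∀ j : Idx, 0 < ord j ∧ (∀ i, (8 : ℤ) ∣ (ord j : ℤ) * tab j i) ∧
    ∀ m < ord j, 0 < m → ¬ ∀ i, (8 : ℤ) ∣ (m : ℤ) * tab j i := by decide +kernel
theorem tab_class : ∀ j : Idx, j = 0 ∨ (nrm j = 12 ∧ ord j = 8) ∨ (nrm j = 16 ∧ ord j = 4) ∨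
    (nrm j = 32 ∧ ord j = 2) ∨ (nrm j = 44 ∧ ord j = 8) ∨ (nrm j = 48 ∧ ord j = 4) ∨
    (nrm j = 64 ∧ ord j = 2) := by decide +kernel

/-- Integral coordinates of the dual lattice. -/
def Good (z : Fin 4 → ℤ) : Prop :=
  z 0 + z 1 + z 2 + z 3 = 0 ∧ 4 ∣ z 1 - z 0 ∧ 4 ∣ z 2 - z 0 ∧ 4 ∣ z 3 - z 0

theorem tab_good (j : Idx) : Good (tab j) := by
  have h := tab_res j
  have h' := tab_sum j
  refine ⟨h', ?_, ?_, ?_⟩ <;> omega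

/-- The vector with scaled coordinates `z`. -/
def sv (z : Fin 4 → ℤ) : E 4 := (Real.sqrt 2 / 8) • intVec z

theorem intVec_apply' (z : Fin 4 → ℤ) (i : Fin 4) : intVec z i = (z i : ℝ) := rfl

theorem sv_apply (z : Fin 4 → ℤ) (i : Fin 4) : sv z i = Real.sqrt 2 / 8 * (z i : ℝ) := rfl

theorem mem_Λ3 (x : E 4) : x ∈ Λ3 ↔
    ∃ y : Fin 4 → ℤ, y 0 + y 1 + y 2 + y 3 = 0 ∧ x = Real.sqrt 2 • intVec y := by
  constructor
  · intro h
    refine Submodule.span_induction (fun _ h => h) ?_ ?_ ?_ h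
    · refine ⟨0, by simp, ?_⟩
      ext i
      simp [intVec_apply']
    · rintro a b - - ⟨y, hy, rfl⟩ ⟨w, hw, rfl⟩
      refine ⟨y + w, by simp only [Pi.add_apply]; omega, ?_⟩
      ext i
      simp [intVec_apply']
      ring
    · rintro c a - ⟨y, hy, rfl⟩
      refine ⟨c • y, ?_, ?_⟩
      · simp only [Pi.smul_apply, smul_eq_mul]
        rw [← mul_add, ← mul_add, ← mul_add, hy, mul_zero]
      · ext i
        simp [intVec_apply']
        ring
  · intro h
    exact Submodule.subset_span h

theorem sqrt2_mul : Real.sqrt 2 * Real.sqrt 2 = 2 := Real.mul_self_sqrt (by norm_num)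
theorem sqrt2_ne : Real.sqrt 2 ≠ 0 := by positivity

theorem inner4 (x y : E 4) : ⟪x, y⟫ = x 0 * y 0 + x 1 * y 1 + x 2 * y 2 + x 3 * y 3 := by
  simp [PiLp.inner_apply, Fin.sum_univ_four]
  ring

theorem sv_mem_dual {z : Fin 4 → ℤ} (hz : Good z) : sv z ∈ dualLatticeIn Λ3 := by
  obtain ⟨h0, ⟨a, ha⟩, ⟨b, hb⟩, ⟨c, hc⟩⟩ := hz
  refine ⟨?_, ?_⟩
  · rw [Fin.sum_univ_four]
    simp only [sv_apply]
    have : (z 0 : ℝ) + z 1 + z 2 + z 3 = 0 := by exact_mod_cast h0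
    linear_combination (Real.sqrt 2 / 8) * this
  · intro y hy
    obtain ⟨w, hw, rfl⟩ := (mem_Λ3 y).1 hy
    refine ⟨a * w 1 + b * w 2 + c * w 3, ?_⟩
    rw [inner4]
    simp only [sv_apply, PiLp.smul_apply, intVec_apply', smul_eq_mul]
    have hw' : (w 0 : ℝ) + w 1 + w 2 + w 3 = 0 := by exact_mod_cast hw
    have ha' : (z 1 : ℝ) - z 0 = 4 * a := by exact_mod_cast ha
    have hb' : (z 2 : ℝ) - z 0 = 4 * b := by exact_mod_cast hb
    have hc' : (z 3 : ℝ) - z 0 = 4 * c := by exact_mod_cast hc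
    push_cast
    linear_combination (1 / 8 * (z 0 * w 0 + z 1 * w 1 + z 2 * w 2 + z 3 * w 3)) * sqrt2_mul
      + (z 0 / 4 : ℝ) * hw' + (w 1 / 4 : ℝ) * ha' + (w 2 / 4 : ℝ) * hb' + (w 3 / 4 : ℝ) * hc'

theorem exists_of_mem_dual {x : E 4} (hx : x ∈ dualLatticeIn Λ3) : ∃ z, Good z ∧ x = sv z := by
  obtain ⟨h0, h⟩ := hx
  rw [Fin.sum_univ_four] at h0
  have key : ∀ w : Fin 4 → ℤ, w 0 + w 1 + w 2 + w 3 = 0 →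
      ∃ k : ℤ, Real.sqrt 2 * (x 0 * w 0 + x 1 * w 1 + x 2 * w 2 + x 3 * w 3) = k := by
    intro w hw
    obtain ⟨k, hk⟩ := h _ ((mem_Λ3 _).2 ⟨w, hw, rfl⟩)
    refine ⟨k, ?_⟩
    rw [← hk, inner4]
    simp only [PiLp.smul_apply, intVec_apply', smul_eq_mul]
    ring
  obtain ⟨a, ha⟩ := key ![-1, 1, 0, 0] (by decide +kernel)
  obtain ⟨b, hb⟩ := key ![-1, 0, 1, 0] (by decide +kernel)
  obtain ⟨c, hc⟩ := key ![-1, 0, 0, 1] (by decide +kernel)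
  simp at ha hb hc
  refine ⟨![-(a + b + c), -(a + b + c) + 4 * a, -(a + b + c) + 4 * b, -(a + b + c) + 4 * c],
    ⟨?_, ?_, ?_, ?_⟩, ?_⟩
  · simp; ring
  · simp
  · simp
  · simp
  · have e0 : x 0 = Real.sqrt 2 / 8 * (-(a + b + c)) := by
      linear_combination (1/4) * h0 + (-1/8) * (Real.sqrt 2) * (ha + hb + hc)
        + (1/8) * (3 * x 0 - x 1 - x 2 - x 3 : ℝ) * (- sqrt2_mul) 
    have e1 : x 1 = x 0 + Real.sqrt 2 / 2 * a := by
      linear_combination (1/2) * Real.sqrt 2 * ha + (1/2) * (x 1 - x 0) * (- sqrt2_mul)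
    have e2 : x 2 = x 0 + Real.sqrt 2 / 2 * b := by
      linear_combination (1/2) * Real.sqrt 2 * hb + (1/2) * (x 2 - x 0) * (- sqrt2_mul)
    have e3 : x 3 = x 0 + Real.sqrt 2 / 2 * c := by
      linear_combination (1/2) * Real.sqrt 2 * hc + (1/2) * (x 3 - x 0) * (- sqrt2_mul)
    ext i
    rw [sv_apply]
    fin_cases i
    · simp [e0]
    · simp [e1, e0]; ring
    · simp [e2, e0]; ring
    · simp [e3, e0]; ring

theorem norm_sv (z : Fin 4 → ℤ) :
    ‖sv z‖ ^ 2 = ((z 0 ^ 2 + z 1 ^ 2 + z 2 ^ 2 + z 3 ^ 2 : ℤ) : ℝ) / 32 := by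
  rw [← real_inner_self_eq_norm_sq, inner4]
  simp only [sv_apply]
  push_cast
  linear_combination (1 / 64 * (z 0 ^ 2 + z 1 ^ 2 + z 2 ^ 2 + z 3 ^ 2 : ℝ)) * sqrt2_mul

theorem sv_mem_Λ3 {z : Fin 4 → ℤ} (hz : Good z) : sv z ∈ Λ3 ↔ ∀ i, 8 ∣ z i := by
  rw [mem_Λ3]
  constructor
  · rintro ⟨y, -, h⟩ i
    refine ⟨y i, ?_⟩
    have := congrArg (fun v : E 4 => v i) h
    simp only [sv_apply, PiLp.smul_apply, intVec_apply', smul_eq_mul] at this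
    have h2 : Real.sqrt 2 * (z i : ℝ) = Real.sqrt 2 * (8 * y i) := by linear_combination 8 * this
    exact_mod_cast mul_left_cancel₀ sqrt2_ne h2
  · intro h
    choose y hy using h
    refine ⟨y, ?_, ?_⟩
    · have := hz.1
      have h0 := hy 0
      have h1 := hy 1
      have h2 := hy 2
      have h3 := hy 3
      omega
    · ext i
      simp only [sv_apply, PiLp.smul_apply, intVec_apply', smul_eq_mul, hy i]
      push_cast
      ring

theorem Good.sub {z w : Fin 4 → ℤ} (hz : Good z) (hw : Good w) : Good (z - w) := by
  simp only [Good, Pi.sub_apply] at *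
  omega

theorem Good.smul {z : Fin 4 → ℤ} (hz : Good z) (k : ℤ) : Good (k • z) := by
  obtain ⟨h0, ⟨a, ha⟩, ⟨b, hb⟩, ⟨c, hc⟩⟩ := hz
  simp only [Good, Pi.smul_apply, smul_eq_mul]
  refine ⟨by linear_combination k * h0, ⟨k * a, by linear_combination k * ha⟩,
    ⟨k * b, by linear_combination k * hb⟩, ⟨k * c, by linear_combination k * hc⟩⟩

theorem sv_sub (z w : Fin 4 → ℤ) : sv (z - w) = sv z - sv w := by
  ext i
  simp only [sv_apply, PiLp.sub_apply, Pi.sub_apply]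
  push_cast
  ring

theorem sv_smul (k : ℤ) (z : Fin 4 → ℤ) : sv (k • z) = k • sv z := by
  ext i
  have h : (k • z) i = k * z i := rfl
  rw [sv_apply, h, PiLp.smul_apply, sv_apply, zsmul_eq_mul]
  push_cast
  ring

/-- The coset of `sv z`. -/
def cls (z : Fin 4 → ℤ) (hz : Good z) : DualQuotIn Λ3 :=
  Submodule.Quotient.mk ⟨sv z, sv_mem_dual hz⟩

theorem cls_eq {z w : Fin 4 → ℤ} (hz : Good z) (hw : Good w) :
    cls z hz = cls w hw ↔ ∀ i, 8 ∣ z i - w i := by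
  have := sv_mem_Λ3 (hz.sub hw)
  rw [sv_sub] at this
  unfold cls
  rw [Submodule.Quotient.eq, Submodule.mem_comap]
  exact this

theorem smul_cls_eq_zero {z : Fin 4 → ℤ} (hz : Good z) (k : ℕ) :
    k • cls z hz = 0 ↔ ∀ i, (8 : ℤ) ∣ (k : ℤ) * z i := by
  have := sv_mem_Λ3 (hz.smul k)
  rw [sv_smul] at this
  unfold cls
  rw [← natCast_zsmul, ← Submodule.Quotient.mk_smul, Submodule.Quotient.mk_eq_zero,
    Submodule.mem_comap]
  exact this

/-- The 32 cosets. -/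
def F (j : Idx) : DualQuotIn Λ3 := cls (tab j) (tab_good j)

theorem F_inj : Function.Injective F := by
  rintro ⟨a, b, c⟩ ⟨a', b', c'⟩ h
  have h := (cls_eq _ _).1 h
  have h0 := h 0
  have h1 := h 1
  have h2 := h 2
  have r := tab_res (a, b, c)
  have r' := tab_res (a', b', c')
  simp only at r r'
  have e0 : a = a' := by omega
  have e1 : b = b' := by omega
  have e2 : c = c' := by omega
  rw [e0, e1, e2]

theorem exists_idx {z : Fin 4 → ℤ} (hz : Good z) : ∃ j, ∀ i, 8 ∣ z i - tab j i := by
  obtain ⟨h0, ha, hb, hc⟩ := hz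
  refine ⟨(⟨(z 0 % 8).toNat, by omega⟩, ⟨((z 1 - z 0) / 4 % 2).toNat, by omega⟩,
    ⟨((z 2 - z 0) / 4 % 2).toNat, by omega⟩), ?_⟩
  generalize hj : ((⟨(z 0 % 8).toNat, by omega⟩, ⟨((z 1 - z 0) / 4 % 2).toNat, by omega⟩,
    ⟨((z 2 - z 0) / 4 % 2).toNat, by omega⟩) : Idx) = j
  have r := tab_res j
  have s := tab_sum j
  have j0 : (j.1.val : ℤ) = z 0 % 8 := by rw [← hj]; simp only; omega
  have j1 : (j.2.1.val : ℤ) = (z 1 - z 0) / 4 % 2 := by rw [← hj]; simp only; omega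
  have j2 : (j.2.2.val : ℤ) = (z 2 - z 0) / 4 % 2 := by rw [← hj]; simp only; omega
  rw [j0, j1, j2] at r
  have c0 : 8 ∣ z 0 - tab j 0 := by omega
  have c1 : 8 ∣ z 1 - tab j 1 := by omega
  have c2 : 8 ∣ z 2 - tab j 2 := by omega
  have c3 : 8 ∣ z 3 - tab j 3 := by omega
  intro i
  fin_cases i
  exacts [c0, c1, c2, c3]

theorem F_surj : Function.Surjective F := by
  intro c
  obtain ⟨⟨x, hx⟩, rfl⟩ := Submodule.Quotient.mk_surjective _ c
  obtain ⟨z, hz, rfl⟩ := exists_of_mem_dual hx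
  obtain ⟨j, hj⟩ := exists_idx hz
  exact ⟨j, ((cls_eq hz (tab_good j)).2 hj).symm⟩

theorem term_bound (t l z : ℤ) (h1 : -8 ≤ 2 * t + l) (h2 : 2 * t + l ≤ 8) (h : 8 ∣ z - t) :
    t ^ 2 + l * t ≤ z ^ 2 + l * z := by
  obtain ⟨y, hy⟩ := h
  obtain rfl : z = t + 8 * y := by omega
  rcases lt_trichotomy y 0 with hy | hy | hy
  · nlinarith [mul_nonneg (by omega : 0 ≤ -y) (by omega : 0 ≤ 8 - (2 * t + l)),
      mul_nonneg (by omega : 0 ≤ -y) (by omega : 0 ≤ -y - 1)]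
  · subst hy; simp
  · nlinarith [mul_nonneg (by omega : 0 ≤ y) (by omega : 0 ≤ 8 + (2 * t + l)),
      mul_nonneg (by omega : 0 ≤ y) (by omega : 0 ≤ y - 1)]

theorem F_min (j : Idx) : CosetMinNormIn Λ3 (F j) ((nrm j : ℝ) / 32) := by
  refine ⟨⟨⟨sv (tab j), sv_mem_dual (tab_good j)⟩, rfl, ?_⟩, ?_⟩
  · exact (norm_sv _).symm
  · rintro r ⟨⟨x, hx⟩, hc, rfl⟩
    obtain ⟨z, hz, rfl⟩ := exists_of_mem_dual hx
    have h := (cls_eq hz (tab_good j)).1 hc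
    have key : ∀ i, tab j i ^ 2 + lam j * tab j i ≤ z i ^ 2 + lam j * z i :=
      fun i => term_bound _ _ _ (tab_lam j i).1 (tab_lam j i).2 (h i)
    have hn : nrm j ≤ z 0 ^ 2 + z 1 ^ 2 + z 2 ^ 2 + z 3 ^ 2 := by
      have s := tab_sum j
      have s' := hz.1
      unfold nrm
      linear_combination key 0 + key 1 + key 2 + key 3 + lam j * s' - lam j * s
    simp only
    rw [norm_sv]
    have : (nrm j : ℝ) ≤ ((z 0 ^ 2 + z 1 ^ 2 + z 2 ^ 2 + z 3 ^ 2 : ℤ) : ℝ) := by exact_mod_cast hn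
    linarith

theorem F_ord (j : Idx) : addOrderOf (F j) = ord j := by
  obtain ⟨h0, h1, h2⟩ := tab_ord j
  rw [addOrderOf_eq_iff h0]
  exact ⟨(smul_cls_eq_zero _ _).2 h1, fun m hm hm' h => h2 m hm hm' ((smul_cls_eq_zero _ _).1 h)⟩

theorem F_zero : F 0 = 0 := by
  have := F_ord 0
  rw [show ord 0 = 1 by decide +kernel] at this
  exact AddMonoid.addOrderOf_eq_one_iff.1 this

theorem F_iff (j : Idx) (n : ℤ) (m : ℝ) (o : ℕ) (hm : m = n / 32) :
    (CosetMinNormIn Λ3 (F j) m ∧ addOrderOf (F j) = o) ↔ (nrm j = n ∧ ord j = o) := by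
  rw [F_ord]
  refine and_congr_left fun _ => ⟨fun h => ?_, fun h => ?_⟩
  · have := h.unique (F_min j)
    have h3 : (n : ℝ) = nrm j := by linarith
    exact_mod_cast h3.symm
  · rw [hm, ← h]
    exact F_min j

theorem count (n : ℤ) (m : ℝ) (o k : ℕ) (hm : m = n / 32)
    (hk : (Finset.univ.filter fun j : Idx => nrm j = n ∧ ord j = o).card = k) :
    {c : DualQuotIn Λ3 | CosetMinNormIn Λ3 c m ∧ addOrderOf c = o}.ncard = k := by
  have : {c : DualQuotIn Λ3 | CosetMinNormIn Λ3 c m ∧ addOrderOf c = o} =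
      F '' (Finset.univ.filter fun j : Idx => nrm j = n ∧ ord j = o : Finset Idx) := by
    ext c
    obtain ⟨j, rfl⟩ := F_surj c
    rw [F_inj.mem_set_image, Set.mem_ofPred_eq, F_iff j n m o hm]
    simp
  rw [this, Set.ncard_image_of_injective _ F_inj, Set.ncard_coe_finset, hk]

/-- The quotient `Λ₃♯/Λ₃` has exactly 32 elements: the zero coset, 8 cosets of minimal
norm 3/8 and order 8, 6 cosets of minimal norm 1/2 and order 4, 6 cosets of minimal
norm 1 and order 2, 8 cosets of minimal norm 11/8 and order 8, 2 cosets of minimal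
norm 3/2 and order 4, and 1 coset of minimal norm 2 and order 2. -/
theorem Λ3_dual_quotient_classes :
    Nat.card (DualQuotIn Λ3) = 32 ∧
    (∀ c : DualQuotIn Λ3, c = 0 ∨
      (CosetMinNormIn Λ3 c (3/8) ∧ addOrderOf c = 8) ∨
      (CosetMinNormIn Λ3 c (1/2) ∧ addOrderOf c = 4) ∨
      (CosetMinNormIn Λ3 c 1 ∧ addOrderOf c = 2) ∨
      (CosetMinNormIn Λ3 c (11/8) ∧ addOrderOf c = 8) ∨
      (CosetMinNormIn Λ3 c (3/2) ∧ addOrderOf c = 4) ∨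
      (CosetMinNormIn Λ3 c 2 ∧ addOrderOf c = 2)) ∧
    {c : DualQuotIn Λ3 | CosetMinNormIn Λ3 c (3/8) ∧ addOrderOf c = 8}.ncard = 8 ∧
    {c : DualQuotIn Λ3 | CosetMinNormIn Λ3 c (1/2) ∧ addOrderOf c = 4}.ncard = 6 ∧
    {c : DualQuotIn Λ3 | CosetMinNormIn Λ3 c 1 ∧ addOrderOf c = 2}.ncard = 6 ∧
    {c : DualQuotIn Λ3 | CosetMinNormIn Λ3 c (11/8) ∧ addOrderOf c = 8}.ncard = 8 ∧
    {c : DualQuotIn Λ3 | CosetMinNormIn Λ3 c (3/2) ∧ addOrderOf c = 4}.ncard = 2 ∧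
    {c : DualQuotIn Λ3 | CosetMinNormIn Λ3 c 2 ∧ addOrderOf c = 2}.ncard = 1 := by
  refine ⟨?_, ?_, count 12 _ _ _ (by norm_num) (by decide +kernel),
    count 16 _ _ _ (by norm_num) (by decide +kernel), count 32 _ _ _ (by norm_num) (by decide +kernel),
    count 44 _ _ _ (by norm_num) (by decide +kernel), count 48 _ _ _ (by norm_num) (by decide +kernel),
    count 64 _ _ _ (by norm_num) (by decide +kernel)⟩
  · rw [← Nat.card_congr (Equiv.ofBijective F ⟨F_inj, F_surj⟩)]
    simp
  · intro c
    obtain ⟨j, rfl⟩ := F_surj c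
    rw [F_iff j 12 _ _ (by norm_num), F_iff j 16 _ _ (by norm_num), F_iff j 32 _ _ (by norm_num),
      F_iff j 44 _ _ (by norm_num), F_iff j 48 _ _ (by norm_num), F_iff j 64 _ _ (by norm_num)]
    rcases tab_class j with h | h
    · left
      rw [h, F_zero]
    · exact Or.inr h
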